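/- arXiv:2103.14246 — 4 statements merged into one kernel-verified Lean document; each statement's English description precedes it below -/
import Mathlib

section
/- With the one-step Bellman setup, the Taylor estimator of the backward difference is unbiased: E[ΔŶ | 𝒢] = E[ΔY | 𝒢] = −L(X) almost surely. -/
open MeasureTheory ProbabilityTheory Matrix

/-- The standard Gaussian measure on `ℝⁿ` (coordinates i.i.d. `N(0,1)`). -/
noncomputable def stdGaussian (n : ℕ) : Measure (Fin n → ℝ) :=
  Measure.pi fun _ => gaussianReal 0 1

/-- The gradient of `f : ℝⁿ → ℝ`, as a vector of partial derivatives. -/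
noncomputable def grad {n : ℕ} (f : (Fin n → ℝ) → ℝ) (x : Fin n → ℝ) : Fin n → ℝ :=
  fun i => fderiv ℝ f x (Pi.single i 1)

/-- The Hessian matrix of `f : ℝⁿ → ℝ`. -/
noncomputable def hess {n : ℕ} (f : (Fin n → ℝ) → ℝ) (x : Fin n → ℝ) :
    Matrix (Fin n) (Fin n) ℝ :=
  Matrix.of fun i j => fderiv ℝ (fun y => fderiv ℝ f y (Pi.single j 1)) x (Pi.single i 1)



theorem aux_condExp
    {Ω : Type*} (𝒢 : MeasurableSpace Ω) [mΩ : MeasurableSpace Ω]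
    (P : Measure Ω) [IsProbabilityMeasure P]
    {E G : Type*} [MeasurableSpace E] [MeasurableSpace G] (h𝒢 : 𝒢 ≤ mΩ)
    (W : Ω → E) (hWmeas : Measurable W) (γ : Measure E) [IsProbabilityMeasure γ]
    (hWlaw : Measure.map W P = γ)
    (hWindep : Indep (MeasurableSpace.comap W inferInstance) 𝒢 P)
    (X : Ω → G) (hX : Measurable[𝒢] X) (g : G × E → ℝ) (hg : Measurable g)
    (hint : Integrable (fun ω => g (X ω, W ω)) P) :
    P[fun ω => g (X ω, W ω)|𝒢] =ᵐ[P] fun ω => ∫ w, g (X ω, w) ∂γ := by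
  have hX' : Measurable X := hX.mono h𝒢 le_rfl
  have hmap : ∀ {H : Type _} [MeasurableSpace H] (Y : Ω → H), Measurable[𝒢] Y →
      P.map (fun ω => (Y ω, W ω)) = (P.map Y).prod γ := by
    intro H _ Y hY
    have hind : IndepFun Y W P := by
      rw [IndepFun_iff_Indep]
      exact indep_of_indep_of_le_left hWindep.symm hY.comap_le
    rw [← hWlaw]
    exact (indepFun_iff_map_prod_eq_prod_map_map (hY.mono h𝒢 le_rfl).aemeasurable
      hWmeas.aemeasurable).1 hind
  have hsm : StronglyMeasurable (fun x => ∫ w, g (x, w) ∂γ) :=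
    hg.stronglyMeasurable.integral_prod_right'
  have hint2 : Integrable (fun ω => ∫ w, g (X ω, w) ∂γ) P := by
    have h1 : Integrable g ((P.map X).prod γ) := by
      rw [← hmap X hX]
      exact (integrable_map_measure hg.aestronglyMeasurable
        (hX'.prodMk hWmeas).aemeasurable).2 hint
    have : IsProbabilityMeasure (P.map X) := Measure.isProbabilityMeasure_map hX'.aemeasurable
    have h2 := h1.integral_prod_left
    exact (integrable_map_measure hsm.aestronglyMeasurable hX'.aemeasurable).1 h2
  symm
  refine ae_eq_condExp_of_forall_setIntegral_eq h𝒢 hint (fun s _ _ => hint2.integrableOn) ?_ ?_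
  · intro s hs _
    have hs' := h𝒢 s hs
    let Y : Ω → G × ℝ := fun ω => (X ω, s.indicator (fun _ => (1:ℝ)) ω)
    have hY : Measurable[𝒢] Y :=
      Measurable.prodMk hX (Measurable.indicator measurable_const hs)
    have hY' : Measurable Y := hY.mono h𝒢 le_rfl
    have hgm : Measurable (fun p : (G × ℝ) × E => p.1.2 * g (p.1.1, p.2)) := by fun_prop
    have e1 : ∀ f : Ω → ℝ, ∫ ω in s, f ω ∂P = ∫ ω, (Y ω).2 * f ω ∂P := by
      intro f
      rw [← integral_indicator hs']
      congr 1
      ext ω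
      by_cases h : ω ∈ s <;> simp [Y, h]
    have hi : Integrable (fun p : (G × ℝ) × E => p.1.2 * g (p.1.1, p.2)) ((P.map Y).prod γ) := by
      rw [← hmap Y hY]
      refine (integrable_map_measure hgm.aestronglyMeasurable
        (hY'.prodMk hWmeas).aemeasurable).2 ?_
      refine (hint.indicator hs').congr (Filter.Eventually.of_forall fun ω => ?_)
      by_cases h : ω ∈ s <;> simp [Y, h]
    have : IsProbabilityMeasure (P.map Y) := Measure.isProbabilityMeasure_map hY'.aemeasurable
    rw [e1, e1]
    have e2 : ∫ ω, (Y ω).2 * g (X ω, W ω) ∂P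
        = ∫ p, p.1.2 * g (p.1.1, p.2) ∂((P.map Y).prod γ) := by
      rw [← hmap Y hY, integral_map (hY'.prodMk hWmeas).aemeasurable hgm.aestronglyMeasurable]
    rw [e2, integral_prod _ hi, integral_map hY'.aemeasurable
      hgm.stronglyMeasurable.integral_prod_right'.aestronglyMeasurable]
    simp only [integral_const_mul]
    rfl
  · exact (hsm.comp_measurable hX).aestronglyMeasurable

instance aux_inst (n : ℕ) : IsProbabilityMeasure (_root_.stdGaussian n) := by
  unfold _root_.stdGaussian; infer_instance

theorem aux_mp (n : ℕ) (i : Fin n) :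
    MeasurePreserving (fun w : Fin n → ℝ => w i) (_root_.stdGaussian n) (gaussianReal 0 1) :=
  measurePreserving_eval (fun _ : Fin n => gaussianReal 0 1) i

theorem aux_memLp (n : ℕ) (i : Fin n) :
    MemLp (fun w : Fin n → ℝ => w i) 2 (_root_.stdGaussian n) :=
  (memLp_id_gaussianReal (μ := 0) (v := 1) 2).comp_measurePreserving (aux_mp n i)

theorem aux_one (n : ℕ) (i : Fin n) : ∫ w, w i ∂(_root_.stdGaussian n) = 0 := by
  have h := integral_map (μ := _root_.stdGaussian n) (f := fun x : ℝ => x) (aux_mp n i).measurable.aemeasurable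
    (by fun_prop)
  rw [(aux_mp n i).map_eq, integral_id_gaussianReal] at h
  exact h.symm

theorem aux_two (n : ℕ) (i j : Fin n) :
    ∫ w, w i * w j ∂(_root_.stdGaussian n) = (1 : Matrix (Fin n) (Fin n) ℝ) i j := by
  by_cases hij : i = j
  · subst hij
    have h := integral_map (μ := _root_.stdGaussian n) (f := fun x : ℝ => x * x) (aux_mp n i).measurable.aemeasurable
      (by fun_prop)
    rw [← h, (aux_mp n i).map_eq]
    have h2 := variance_of_integral_eq_zero (X := fun x : ℝ => x) (μ := gaussianReal 0 1)
      (by fun_prop) (by simp)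
    rw [variance_fun_id_gaussianReal] at h2
    simp only [Matrix.one_apply_eq, ← pow_two]
    simpa using h2.symm
  · have hind : iIndepFun (fun (i : Fin n) (w : Fin n → ℝ) => w i) (_root_.stdGaussian n) :=
      iIndepFun_pi (μ := fun _ : Fin n => gaussianReal 0 1) (X := fun _ x => x)
        (fun _ => by fun_prop)
    have h := (hind.indepFun hij).integral_fun_mul_eq_mul_integral
      (aux_memLp n i).aestronglyMeasurable (aux_memLp n j).aestronglyMeasurable
    rw [h, aux_one, Matrix.one_apply_ne hij]
    simp

theorem aux_int2 (n : ℕ) (i j : Fin n) :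
    Integrable (fun w : Fin n → ℝ => w i * w j) (_root_.stdGaussian n) :=
  (aux_memLp n i).integrable_mul (aux_memLp n j)

theorem aux_int1 (n : ℕ) (i : Fin n) :
    Integrable (fun w : Fin n → ℝ => w i) (_root_.stdGaussian n) :=
  (aux_memLp n i).integrable (by norm_num)

theorem aux_poly (n : ℕ) (l : ℝ) (z : Fin n → ℝ) (M : Matrix (Fin n) (Fin n) ℝ) :
    ∫ w, (-l + (∑ i, z i * w i)
      + (1 / 2) * ∑ i, ∑ j, M i j * (w j * w i - (1 : Matrix (Fin n) (Fin n) ℝ) j i))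
      ∂(_root_.stdGaussian n) = -l := by
  have i1 : Integrable (fun w : Fin n → ℝ => ∑ i, z i * w i) (_root_.stdGaussian n) :=
    integrable_finsetSum _ fun i _ => (aux_int1 n i).const_mul _
  have i3 : ∀ i j, Integrable (fun w : Fin n → ℝ =>
      M i j * (w j * w i - (1 : Matrix (Fin n) (Fin n) ℝ) j i)) (_root_.stdGaussian n) :=
    fun i j => ((aux_int2 n j i).sub (integrable_const _)).const_mul _
  have i2 : Integrable (fun w : Fin n → ℝ =>
      ∑ i, ∑ j, M i j * (w j * w i - (1 : Matrix (Fin n) (Fin n) ℝ) j i))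
      (_root_.stdGaussian n) :=
    integrable_finsetSum _ fun i _ => integrable_finsetSum _ fun j _ => i3 i j
  have i4 : Integrable (fun w : Fin n → ℝ => -l + ∑ i, z i * w i) (_root_.stdGaussian n) :=
    (integrable_const _).add i1
  rw [integral_add i4 (i2.const_mul _),
    integral_add (integrable_const _) i1, integral_const_mul,
    integral_finsetSum _ fun i _ => (aux_int1 n i).const_mul _,
    integral_finsetSum _ fun i _ => integrable_finsetSum _ fun j _ => i3 i j]
  have z1 : ∀ i, ∫ w, z i * w i ∂(_root_.stdGaussian n) = 0 := fun i => by
    rw [integral_const_mul, aux_one, mul_zero]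
  have z2 : ∀ i, ∫ w, ∑ j, M i j * (w j * w i - (1 : Matrix (Fin n) (Fin n) ℝ) j i)
      ∂(_root_.stdGaussian n) = 0 := fun i => by
    rw [integral_finsetSum _ fun j _ => i3 i j]
    refine Finset.sum_eq_zero fun j _ => ?_
    rw [integral_const_mul, integral_sub (aux_int2 n j i) (integrable_const _), aux_two]
    simp
  simp [z1, z2]

theorem aux_grad {n : ℕ} (f : (Fin n → ℝ) → ℝ) (hf : ContDiff ℝ 2 f) (i : Fin n) :
    Measurable fun x => grad f x i := by
  unfold grad
  exact ((hf.continuous_fderiv (by norm_num)).clm_apply continuous_const).measurable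

theorem aux_hess {n : ℕ} (f : (Fin n → ℝ) → ℝ) (hf : ContDiff ℝ 2 f) (i j : Fin n) :
    Measurable fun x => hess f x i j := by
  have h1 : ContDiff ℝ 1 (fun y => fderiv ℝ f y (Pi.single j 1)) :=
    (hf.fderiv_right (m := 1) (by norm_num)).clm_apply contDiff_const
  exact ((h1.continuous_fderiv (by norm_num)).clm_apply continuous_const).measurable

/-- **Unbiasedness of the Taylor estimator of the backward difference.**
With the one-step Bellman setup, `E[ΔŶ | 𝒢] = E[ΔY | 𝒢] = −L(X)` almost surely. -/
theorem taylor_estimator_unbiased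
    {Ω : Type*} (𝒢 : MeasurableSpace Ω) [mΩ : MeasurableSpace Ω]
    (P : Measure Ω) [IsProbabilityMeasure P]
    {n : ℕ} (h𝒢 : 𝒢 ≤ mΩ)
    -- the noise W : i.i.d. standard normal coordinates, independent of 𝒢
    (W : Ω → Fin n → ℝ) (hWmeas : Measurable W)
    (hWlaw : Measure.map W P = stdGaussian n)
    (hWindep : Indep (MeasurableSpace.comap W inferInstance) 𝒢 P)
    -- the current state X is 𝒢-measurable; dynamics data F, Σ, L
    (X : Ω → Fin n → ℝ) (hX : Measurable[𝒢] X)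
    (F : (Fin n → ℝ) → Fin n → ℝ) (hF : Measurable F)
    (S : (Fin n → ℝ) → Matrix (Fin n) (Fin n) ℝ) (hS : ∀ i j, Measurable fun x => S x i j)
    (L : (Fin n → ℝ) → ℝ) (hL : Measurable L)
    -- X̄ := X + F(X), X' := X̄ + Σ(X) W
    (Xb : Ω → Fin n → ℝ) (hXb : ∀ ω, Xb ω = X ω + F (X ω))
    (X' : Ω → Fin n → ℝ) (hX' : ∀ ω, X' ω = Xb ω + (S (X ω)).mulVec (W ω))
    -- the next-step value function V' and the one-step Bellman value V
    (V' : (Fin n → ℝ) → ℝ) (hV'meas : Measurable V')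
    (hV'int : Integrable (fun ω => V' (X' ω)) P)
    (V : (Fin n → ℝ) → ℝ)
    (hV : ∀ x, V x = L x + ∫ w, V' (x + F x + (S x).mulVec w) ∂(stdGaussian n))
    -- the C² value function approximation Ṽ and associated Ȳ, Z̄, M̄
    (Vt : (Fin n → ℝ) → ℝ) (hVt : ContDiff ℝ 2 Vt)
    (hVtint : Integrable (fun ω => Vt (X' ω)) P)
    (Zb : Ω → Fin n → ℝ) (hZb : ∀ ω, Zb ω = (S (X ω))ᵀ.mulVec (grad Vt (Xb ω)))
    (Mb : Ω → Matrix (Fin n) (Fin n) ℝ)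
    (hMb : ∀ ω, Mb ω = (S (X ω))ᵀ * hess Vt (Xb ω) * S (X ω))
    (hZbint : ∀ i, Integrable (fun ω => Zb ω i) P)
    (hMbint : ∀ i j, Integrable (fun ω => Mb ω i j) P)
    -- the true backward difference ΔY and the Taylor estimator ΔŶ
    (ΔY : Ω → ℝ) (hΔY : ∀ ω, ΔY ω = V' (X' ω) - V (X ω))
    (ΔYh : Ω → ℝ)
    (hΔYh : ∀ ω, ΔYh ω = -L (X ω) + (∑ i, Zb ω i * W ω i)
      + (1 / 2) * Matrix.trace (Mb ω * (Matrix.vecMulVec (W ω) (W ω) - 1)))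
    -- integrability of all displayed random variables
    (hΔYint : Integrable ΔY P) (hΔYhint : Integrable ΔYh P)
    (hLint : Integrable (fun ω => L (X ω)) P)
    (hVint : Integrable (fun ω => V (X ω)) P) :
    P[ΔYh|𝒢] =ᵐ[P] (fun ω => -L (X ω)) ∧ P[ΔY|𝒢] =ᵐ[P] (fun ω => -L (X ω)) := by
  have hmulVec : Measurable fun p : (Fin n → ℝ) × (Fin n → ℝ) =>
      p.1 + F p.1 + (S p.1).mulVec p.2 := by
    refine (measurable_fst.add (hF.comp measurable_fst)).add ?_
    refine measurable_pi_lambda _ fun i => ?_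
    simp only [Matrix.mulVec, dotProduct]
    refine Finset.measurable_fun_sum _ fun j _ => ?_
    exact ((hS i j).comp measurable_fst).mul ((measurable_pi_apply j).comp measurable_snd)
  constructor
  · let Z : (Fin n → ℝ) → Fin n → ℝ := fun x => (S x)ᵀ.mulVec (grad Vt (x + F x))
    let M : (Fin n → ℝ) → Matrix (Fin n) (Fin n) ℝ :=
      fun x => (S x)ᵀ * hess Vt (x + F x) * S x
    have hxF : Measurable fun x => x + F x := measurable_id.add hF
    have hZ : ∀ i, Measurable fun x => Z x i := fun i => by
      simp only [Z, Matrix.mulVec, dotProduct, Matrix.transpose_apply]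
      exact Finset.measurable_fun_sum _ fun j _ =>
        (hS j i).mul ((aux_grad Vt hVt j).comp hxF)
    have hM : ∀ i j, Measurable fun x => M x i j := fun i j => by
      simp only [M, Matrix.mul_apply, Matrix.transpose_apply]
      exact Finset.measurable_fun_sum _ fun k _ =>
        (Finset.measurable_fun_sum _ fun l _ =>
          (hS l i).mul ((aux_hess Vt hVt l k).comp hxF)).mul (hS k j)
    let g : (Fin n → ℝ) × (Fin n → ℝ) → ℝ := fun p => -L p.1 + (∑ i, Z p.1 i * p.2 i)
      + (1 / 2) * ∑ i, ∑ j, M p.1 i j * (p.2 j * p.2 i - (1 : Matrix (Fin n) (Fin n) ℝ) j i)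
    have hg : Measurable g := by
      refine ((hL.comp measurable_fst).neg.add ?_).add (measurable_const.mul ?_)
      · exact Finset.measurable_fun_sum _ fun i _ =>
          ((hZ i).comp measurable_fst).mul ((measurable_pi_apply i).comp measurable_snd)
      · exact Finset.measurable_fun_sum _ fun i _ => Finset.measurable_fun_sum _ fun j _ =>
          ((hM i j).comp measurable_fst).mul
            ((((measurable_pi_apply j).comp measurable_snd).mul
              ((measurable_pi_apply i).comp measurable_snd)).sub measurable_const)
    have heq : ΔYh = fun ω => g (X ω, W ω) := by
      ext ω
      rw [hΔYh, hZb, hMb, hXb]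
      rfl
    rw [heq] at hΔYhint ⊢
    have h := aux_condExp 𝒢 P h𝒢 W hWmeas _ hWlaw hWindep X hX g hg hΔYhint
    refine h.trans (Filter.Eventually.of_forall fun ω => ?_)
    exact aux_poly n (L (X ω)) (Z (X ω)) (M (X ω))
  · let g : (Fin n → ℝ) × (Fin n → ℝ) → ℝ := fun p => V' (p.1 + F p.1 + (S p.1).mulVec p.2)
    have hg : Measurable g := hV'meas.comp hmulVec
    have heq : (fun ω => V' (X' ω)) = fun ω => g (X ω, W ω) := by
      ext ω
      rw [hX', hXb]
    have hVm : Measurable V := by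
      have : V = fun x => L x + ∫ w, g (x, w) ∂(_root_.stdGaussian n) := funext hV
      rw [this]
      exact hL.add hg.stronglyMeasurable.integral_prod_right'.measurable
    have heq2 : ΔY = (fun ω => V' (X' ω)) - fun ω => V (X ω) := funext hΔY
    have h0 := condExp_sub hV'int hVint 𝒢
    have h1 : P[fun ω => V (X ω)|𝒢] = fun ω => V (X ω) :=
      condExp_of_stronglyMeasurable h𝒢
        (hVm.stronglyMeasurable.comp_measurable hX) hVint
    have h2 := aux_condExp 𝒢 P h𝒢 W hWmeas _ hWlaw hWindep X hX g hg (heq ▸ hV'int)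
    rw [← heq] at h2
    rw [heq2]
    filter_upwards [h0, h2] with ω a b
    rw [a, Pi.sub_apply, b, h1]
    simp only [hV, g]
    ring
end

section
/- With the one-step Bellman setup, the residual error of the Taylor estimator satisfies ΔY − ΔŶ = δ − E[δ | 𝒢] almost surely, where δ := δ^Ṽ + δ^hot is the sum of the representation error and the Taylor remainder. -/
open MeasureTheory ProbabilityTheory Matrix

lemma gauss_coord_int {n : ℕ} (i : Fin n) :
    Integrable (fun w : Fin n → ℝ => w i) (_root_.stdGaussian n) :=
  integrable_comp_eval (μ := fun _ : Fin n => gaussianReal 0 1) (f := fun x : ℝ => x)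
    ((memLp_id_gaussianReal 1).integrable le_rfl)

lemma gauss_coord {n : ℕ} (i : Fin n) :
    ∫ w : Fin n → ℝ, w i ∂(_root_.stdGaussian n) = 0 := by
  have := integral_comp_eval (μ := fun _ : Fin n => gaussianReal 0 1) (i := i)
    (f := fun x : ℝ => x) (by fun_prop)
  unfold _root_.stdGaussian
  rw [this, integral_id_gaussianReal]

lemma gauss_sq : ∫ x : ℝ, x * x ∂(gaussianReal 0 1) = 1 := by
  have h := variance_id_gaussianReal (μ := 0) (v := 1)
  rw [variance_eq_integral (by fun_prop)] at h
  simpa [integral_id_gaussianReal, pow_two] using h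

lemma gauss_mul_int {n : ℕ} (i j : Fin n) :
    Integrable (fun w : Fin n → ℝ => w i * w j) (_root_.stdGaussian n) := by
  have h : ∀ i : Fin n, MemLp (fun w : Fin n → ℝ => w i) 2 (_root_.stdGaussian n) := fun i =>
    (memLp_id_gaussianReal 2).comp_measurePreserving
      (measurePreserving_eval (fun _ : Fin n => gaussianReal 0 1) i)
  exact (h i).integrable_mul (h j)

lemma gauss_mul {n : ℕ} (i j : Fin n) :
    ∫ w : Fin n → ℝ, w i * w j ∂(_root_.stdGaussian n) = if i = j then 1 else 0 := by
  split_ifs with hij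
  · subst hij
    have := integral_comp_eval (μ := fun _ : Fin n => gaussianReal 0 1) (i := i)
      (f := fun x : ℝ => x * x) (by fun_prop)
    unfold _root_.stdGaussian
    rw [this, gauss_sq]
  · have hI := (iIndepFun_pi (μ := fun _ : Fin n => gaussianReal 0 1)
      (X := fun _ x => x) (fun _ => by fun_prop)).indepFun hij
    have := hI.integral_fun_mul_eq_mul_integral
      (measurable_pi_apply i).aestronglyMeasurable (measurable_pi_apply j).aestronglyMeasurable
    have h0 := gauss_coord i
    unfold _root_.stdGaussian at h0 ⊢
    rw [this, h0, zero_mul]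

lemma indep_condExp {Ω β : Type*} {mΩ : MeasurableSpace Ω} {mβ : MeasurableSpace β}
    (P : Measure Ω) [IsProbabilityMeasure P] {n : ℕ} (T : Ω → β) (hT : Measurable T)
    (W : Ω → Fin n → ℝ) (hW : Measurable W) (hI : IndepFun T W P)
    (f : β × (Fin n → ℝ) → ℝ) (hf : Measurable f)
    (hint : Integrable (fun ω => f (T ω, W ω)) P) :
    (P[fun ω => f (T ω, W ω)|mβ.comap T] =ᵐ[P] fun ω => ∫ w, f (T ω, w) ∂(P.map W)) ∧
    ∀ᵐ ω ∂P, Integrable (fun w => f (T ω, w)) (P.map W) := by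
  have hW' : IsProbabilityMeasure (P.map W) := Measure.isProbabilityMeasure_map hW.aemeasurable
  have hc0 : condDistrib W T P =ᵐ[P.map T] Kernel.const β (P.map W) := by
    refine condDistrib_ae_eq_of_measure_eq_compProd (μ := P) T hW.aemeasurable ?_
    rw [Measure.compProd_const]
    exact (indepFun_iff_map_prod_eq_prod_map_map hT.aemeasurable hW.aemeasurable).1 hI
  have hc := ae_of_ae_map hT.aemeasurable hc0
  constructor
  · refine (condExp_prod_ae_eq_integral_condDistrib hT hW.aemeasurable
      hf.stronglyMeasurable hint).trans ?_
    filter_upwards [hc] with ω hω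
    rw [hω]; rfl
  · have hint' : Integrable f (P.map fun a => (T a, W a)) := by
      rwa [integrable_map_measure hf.aestronglyMeasurable (hT.prodMk hW).aemeasurable]
    filter_upwards [hc, hint'.condDistrib_ae hT.aemeasurable hW.aemeasurable] with ω hω h
    rw [hω] at h; exact h

lemma indep_condExp_aux {Ω β : Type*} {mΩ : MeasurableSpace Ω} {mβ : MeasurableSpace β}
    (P : Measure Ω) [IsProbabilityMeasure P] {n : ℕ} (T : Ω → β) (hT : Measurable T)
    (W : Ω → Fin n → ℝ) (hW : Measurable W)
    (hI : Indep (mβ.comap T) (MeasurableSpace.comap W inferInstance) P)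
    (X : β → Fin n → ℝ) (hX : Measurable X)
    (f : (Fin n → ℝ) × (Fin n → ℝ) → ℝ) (hf : Measurable f)
    (hint : Integrable (fun ω => f (X (T ω), W ω)) P) :
    (P[fun ω => f (X (T ω), W ω)|mβ.comap T] =ᵐ[P] fun ω => ∫ w, f (X (T ω), w) ∂(P.map W)) ∧
    ∀ᵐ ω ∂P, Integrable (fun w => f (X (T ω), w)) (P.map W) :=
  indep_condExp P T hT W hW ((IndepFun_iff_Indep _ _ _).2 hI) (fun p => f (X p.1, p.2))
    (hf.comp ((hX.comp measurable_fst).prodMk measurable_snd)) hint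

lemma indep_condExp' {Ω : Type*} (𝒢 : MeasurableSpace Ω) [mΩ : MeasurableSpace Ω]
    (P : Measure Ω) [IsProbabilityMeasure P] {n : ℕ} (h𝒢 : 𝒢 ≤ mΩ)
    (W : Ω → Fin n → ℝ) (hW : Measurable W)
    (hI : Indep (MeasurableSpace.comap W inferInstance) 𝒢 P)
    (X : Ω → Fin n → ℝ) (hX : Measurable[𝒢] X)
    (f : (Fin n → ℝ) × (Fin n → ℝ) → ℝ) (hf : Measurable f)
    (hint : Integrable (fun ω => f (X ω, W ω)) P) :
    (P[fun ω => f (X ω, W ω)|𝒢] =ᵐ[P] fun ω => ∫ w, f (X ω, w) ∂(P.map W)) ∧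
    ∀ᵐ ω ∂P, Integrable (fun w => f (X ω, w)) (P.map W) := by
  have hid : MeasurableSpace.comap (fun ω : Ω => ω) 𝒢 = 𝒢 := MeasurableSpace.comap_id
  have h := @indep_condExp_aux Ω Ω mΩ 𝒢 P _ n (fun ω => ω) (fun s hs => h𝒢 s hs) W hW
    (hid.symm ▸ hI.symm) X hX f hf hint
  rwa [hid] at h

lemma meas_mulVec {α : Type*} [MeasurableSpace α] {n : ℕ} {A : α → Matrix (Fin n) (Fin n) ℝ}
    {v : α → Fin n → ℝ} (hA : ∀ i j, Measurable fun a => A a i j) (hv : Measurable v) :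
    Measurable fun a => (A a).mulVec (v a) := by
  refine measurable_pi_lambda _ fun i => ?_
  simp only [Matrix.mulVec, dotProduct]
  exact Finset.measurable_sum _ fun j _ => (hA i j).mul ((measurable_pi_apply j).comp hv)

lemma meas_mul {α : Type*} [MeasurableSpace α] {n : ℕ} {A B : α → Matrix (Fin n) (Fin n) ℝ}
    (hA : ∀ i j, Measurable fun a => A a i j) (hB : ∀ i j, Measurable fun a => B a i j) (i j) :
    Measurable fun a => (A a * B a) i j := by
  simp only [Matrix.mul_apply]
  exact Finset.measurable_sum _ fun k _ => (hA i k).mul (hB k j)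

lemma meas_grad {n : ℕ} {f : (Fin n → ℝ) → ℝ} : Measurable (grad f) :=
  measurable_pi_lambda _ fun _ => measurable_fderiv_apply_const ℝ f _

lemma meas_hess {n : ℕ} {f : (Fin n → ℝ) → ℝ} (i j) : Measurable fun x => hess f x i j :=
  measurable_fderiv_apply_const ℝ _ _

lemma gauss_linear {n : ℕ} (z : Fin n → ℝ) :
    Integrable (fun w : Fin n → ℝ => ∑ i, z i * w i) (_root_.stdGaussian n) ∧
    ∫ w : Fin n → ℝ, ∑ i, z i * w i ∂(_root_.stdGaussian n) = 0 := by
  refine ⟨integrable_finsetSum _ fun i _ => (gauss_coord_int i).const_mul _, ?_⟩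
  rw [integral_finsetSum _ fun i _ => (gauss_coord_int i).const_mul _]
  simp [integral_const_mul, gauss_coord]

lemma quad_eq {n : ℕ} (M : Matrix (Fin n) (Fin n) ℝ) (w : Fin n → ℝ) :
    ∑ i, w i * M.mulVec w i = ∑ i, ∑ j, M i j * (w i * w j) := by
  refine Finset.sum_congr rfl fun i _ => ?_
  rw [Matrix.mulVec, dotProduct, Finset.mul_sum]
  exact Finset.sum_congr rfl fun j _ => by ring

lemma gauss_quad {n : ℕ} (M : Matrix (Fin n) (Fin n) ℝ) :
    Integrable (fun w : Fin n → ℝ => ∑ i, w i * M.mulVec w i) (_root_.stdGaussian n) ∧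
    ∫ w : Fin n → ℝ, ∑ i, w i * M.mulVec w i ∂(_root_.stdGaussian n) = M.trace := by
  simp only [quad_eq]
  have h : ∀ i j, Integrable (fun w : Fin n → ℝ => M i j * (w i * w j)) (_root_.stdGaussian n) :=
    fun i j => (gauss_mul_int i j).const_mul _
  have h' : ∀ i, Integrable (fun w : Fin n → ℝ => ∑ j, M i j * (w i * w j))
      (_root_.stdGaussian n) := fun i => integrable_finsetSum _ fun j _ => h i j
  refine ⟨integrable_finsetSum _ fun i _ => h' i, ?_⟩
  rw [integral_finsetSum _ fun i _ => h' i, Matrix.trace]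
  refine Finset.sum_congr rfl fun i _ => ?_
  rw [integral_finsetSum _ fun j _ => h i j]
  simp [integral_const_mul, gauss_mul]

lemma trace_id {n : ℕ} (M : Matrix (Fin n) (Fin n) ℝ) (w : Fin n → ℝ) :
    Matrix.trace (M * (Matrix.vecMulVec w w - 1)) = (∑ i, w i * M.mulVec w i) - M.trace := by
  rw [mul_sub, Matrix.trace_sub, mul_one, quad_eq]
  congr 1
  simp only [Matrix.trace, Matrix.diag, Matrix.mul_apply, Matrix.vecMulVec_apply]
  exact Finset.sum_congr rfl fun i _ => Finset.sum_congr rfl fun j _ => by ring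

/-- **Residual error of the Taylor estimator.**
With the one-step Bellman setup, `ΔY − ΔŶ = δ − E[δ | 𝒢]` almost surely, where
`δ := δ^Ṽ + δ^hot` is the sum of the representation error and the Taylor remainder. -/
theorem taylor_estimator_residual
    {Ω : Type*} (𝒢 : MeasurableSpace Ω) [mΩ : MeasurableSpace Ω]
    (P : Measure Ω) [IsProbabilityMeasure P]
    {n : ℕ} (h𝒢 : 𝒢 ≤ mΩ)
    -- the noise W : i.i.d. standard normal coordinates, independent of 𝒢
    (W : Ω → Fin n → ℝ) (hWmeas : Measurable W)
    (hWlaw : Measure.map W P = stdGaussian n)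
    (hWindep : Indep (MeasurableSpace.comap W inferInstance) 𝒢 P)
    -- the current state X is 𝒢-measurable; dynamics data F, Σ, L
    (X : Ω → Fin n → ℝ) (hX : Measurable[𝒢] X)
    (F : (Fin n → ℝ) → Fin n → ℝ) (hF : Measurable F)
    (S : (Fin n → ℝ) → Matrix (Fin n) (Fin n) ℝ) (hS : ∀ i j, Measurable fun x => S x i j)
    (L : (Fin n → ℝ) → ℝ) (hL : Measurable L)
    -- X̄ := X + F(X), X' := X̄ + Σ(X) W
    (Xb : Ω → Fin n → ℝ) (hXb : ∀ ω, Xb ω = X ω + F (X ω))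
    (X' : Ω → Fin n → ℝ) (hX' : ∀ ω, X' ω = Xb ω + (S (X ω)).mulVec (W ω))
    -- the next-step value function V' and the one-step Bellman value V
    (V' : (Fin n → ℝ) → ℝ) (hV'meas : Measurable V')
    (hV'int : Integrable (fun ω => V' (X' ω)) P)
    (V : (Fin n → ℝ) → ℝ)
    (hV : ∀ x, V x = L x + ∫ w, V' (x + F x + (S x).mulVec w) ∂(stdGaussian n))
    -- the C² value function approximation Ṽ and associated Ȳ, Z̄, M̄
    (Vt : (Fin n → ℝ) → ℝ) (hVt : ContDiff ℝ 2 Vt)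
    (hVtint : Integrable (fun ω => Vt (X' ω)) P)
    (Zb : Ω → Fin n → ℝ) (hZb : ∀ ω, Zb ω = (S (X ω))ᵀ.mulVec (grad Vt (Xb ω)))
    (Mb : Ω → Matrix (Fin n) (Fin n) ℝ)
    (hMb : ∀ ω, Mb ω = (S (X ω))ᵀ * hess Vt (Xb ω) * S (X ω))
    (hZbint : ∀ i, Integrable (fun ω => Zb ω i) P)
    (hMbint : ∀ i j, Integrable (fun ω => Mb ω i j) P)
    -- the Taylor remainder δ^hot and the representation error δ^Ṽ; δ := δ^Ṽ + δ^hot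
    (δhot : Ω → ℝ)
    (hδhot : ∀ ω, δhot ω = Vt (X' ω) - (Vt (Xb ω) + (∑ i, Zb ω i * W ω i)
      + (1 / 2) * ∑ i, W ω i * (Mb ω).mulVec (W ω) i))
    (δVt : Ω → ℝ) (hδVt : ∀ ω, δVt ω = V' (X' ω) - Vt (X' ω))
    (δ : Ω → ℝ) (hδ : ∀ ω, δ ω = δVt ω + δhot ω)
    -- the true backward difference ΔY and the Taylor estimator ΔŶ
    (ΔY : Ω → ℝ) (hΔY : ∀ ω, ΔY ω = V' (X' ω) - V (X ω))
    (ΔYh : Ω → ℝ)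
    (hΔYh : ∀ ω, ΔYh ω = -L (X ω) + (∑ i, Zb ω i * W ω i)
      + (1 / 2) * Matrix.trace (Mb ω * (Matrix.vecMulVec (W ω) (W ω) - 1)))
    -- integrability of all displayed random variables
    (hΔYint : Integrable ΔY P) (hΔYhint : Integrable ΔYh P)
    (hδint : Integrable δ P)
    (hLint : Integrable (fun ω => L (X ω)) P)
    (hVint : Integrable (fun ω => V (X ω)) P) :
    (fun ω => ΔY ω - ΔYh ω) =ᵐ[P] (fun ω => δ ω - (P[δ|𝒢]) ω) := by
  
  -- the joint function of state and noise
  set ψ : (Fin n → ℝ) × (Fin n → ℝ) → ℝ := fun p =>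
    V' (p.1 + F p.1 + (S p.1).mulVec p.2) - (Vt (p.1 + F p.1)
      + (∑ i, ((S p.1)ᵀ.mulVec (grad Vt (p.1 + F p.1))) i * p.2 i)
      + (1 / 2) * ∑ i, p.2 i *
        (((S p.1)ᵀ * hess Vt (p.1 + F p.1) * S p.1)).mulVec p.2 i) with hψ
  have hδψ : δ = fun ω => ψ (X ω, W ω) := by
    funext ω
    simp only [hδ, hδVt, hδhot, hψ, hX', hXb, hZb, hMb]
    ring
  have hb : Measurable fun p : (Fin n → ℝ) × (Fin n → ℝ) => p.1 + F p.1 :=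
    measurable_fst.add (hF.comp measurable_fst)
  have hSm : ∀ i j, Measurable fun p : (Fin n → ℝ) × (Fin n → ℝ) => S p.1 i j :=
    fun i j => (hS i j).comp measurable_fst
  have hSt : ∀ i j, Measurable fun p : (Fin n → ℝ) × (Fin n → ℝ) => (S p.1)ᵀ i j :=
    fun i j => hSm j i
  have hV'1 : Measurable fun p : (Fin n → ℝ) × (Fin n → ℝ) =>
      V' (p.1 + F p.1 + (S p.1).mulVec p.2) :=
    hV'meas.comp (hb.add (meas_mulVec hSm measurable_snd))
  have hz := meas_mulVec hSt ((meas_grad (f := Vt)).comp hb)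
  have hm := meas_mulVec (meas_mul (meas_mul hSt
    (fun i j => (meas_hess (f := Vt) i j).comp hb)) hSm) measurable_snd
  have hsnd : ∀ i, Measurable fun p : (Fin n → ℝ) × (Fin n → ℝ) => p.2 i :=
    fun i => (measurable_pi_apply i).comp measurable_snd
  have hψm : Measurable ψ := by
    refine hV'1.sub (((hVt.continuous.measurable.comp hb).add
      (Finset.measurable_sum _ fun i _ => ?_)).add
      ((Finset.measurable_sum _ fun i _ => ?_).const_mul _))
    · exact ((measurable_pi_apply i).comp hz).mul (hsnd i)
    · exact (hsnd i).mul ((measurable_pi_apply i).comp hm)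
  have h1 := (indep_condExp' 𝒢 P h𝒢 W hWmeas hWindep X hX ψ hψm (hδψ ▸ hδint)).1
  have h2 := (indep_condExp' 𝒢 P h𝒢 W hWmeas hWindep X hX _ hV'1
    (by simpa only [hX', hXb] using hV'int)).2
  rw [← hδψ] at h1
  filter_upwards [h1, h2] with ω e1 i2
  rw [e1]
  rw [hWlaw] at i2 ⊢
  have : IsProbabilityMeasure (_root_.stdGaussian n) := by
    unfold _root_.stdGaussian; infer_instance
  have hlin := gauss_linear (Zb ω)
  have hquad := gauss_quad (Mb ω)
  have key : ∫ w, ψ (X ω, w) ∂(_root_.stdGaussian n)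
      = (V (X ω) - L (X ω)) - (Vt (Xb ω) + 0 + (1 / 2) * (Mb ω).trace) := by
    have : (fun w => ψ (X ω, w)) = fun w => V' (X ω + F (X ω) + (S (X ω)).mulVec w) -
        (Vt (Xb ω) + (∑ i, Zb ω i * w i) + (1 / 2) * ∑ i, w i * (Mb ω).mulVec w i) := by
      funext w
      simp only [hψ, hXb, hZb, hMb]
    have ia : Integrable (fun w : Fin n → ℝ => Vt (Xb ω) + ∑ i, Zb ω i * w i)
        (_root_.stdGaussian n) := (integrable_const _).add hlin.1
    have ib : Integrable (fun w : Fin n → ℝ => Vt (Xb ω) + (∑ i, Zb ω i * w i)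
        + (1 / 2) * ∑ i, w i * (Mb ω).mulVec w i)
        (_root_.stdGaussian n) := ia.add (hquad.1.const_mul _)
    rw [this, integral_sub i2 ib, integral_add ia (hquad.1.const_mul _),
      integral_add (integrable_const _) hlin.1, integral_const_mul, hlin.2, hquad.2, hV]
    simp
  rw [key, hΔY, hΔYh, hδ, hδVt, hδhot, trace_id]
  ring
end

section
/- Let D : Ω → ℝⁿ be 𝒢-measurable and bounded, and set Θ := exp(−½‖D‖² + ⟨D, W⟩). Then E_P[Θ] = 1, so Q := P.withDensity(Θ) is a probability measure; moreover, under Q the random vector W − D has law γ (its coordinates are i.i.d. standard normal) and σ(W − D) is independent of 𝒢 under Q. -/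
open MeasureTheory ProbabilityTheory

lemma gauss1_aux (d : ℝ) (s : Set ℝ) (hs : MeasurableSet s) :
    ∫⁻ x, ENNReal.ofReal (Real.exp (-(1 / 2) * d ^ 2 + d * x)) * s.indicator 1 (x - d)
      ∂(gaussianReal 0 1) = gaussianReal 0 1 s := by
  have h1 : Measurable fun x : ℝ => s.indicator (1 : ℝ → ENNReal) (x - d) :=
    (measurable_one.indicator hs).comp (measurable_id.sub_const d)
  have h2 : (gaussianReal d 1).map (fun x => x - d) = gaussianReal 0 1 := by
    rw [gaussianReal_map_sub_const, sub_self]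
  have h3 : gaussianReal 0 1 s = ∫⁻ x, s.indicator 1 (x - d) ∂(gaussianReal d 1) := by
    rw [← h2, ← lintegral_indicator_one hs,
      lintegral_map (measurable_one.indicator hs) (by fun_prop)]
  have h4 : Measurable fun x : ℝ => ENNReal.ofReal (Real.exp (-(1 / 2) * d ^ 2 + d * x)) *
      s.indicator (1 : ℝ → ENNReal) (x - d) := Measurable.mul (by fun_prop) h1
  rw [h3, gaussianReal_of_var_ne_zero d one_ne_zero, gaussianReal_of_var_ne_zero 0 one_ne_zero,
    lintegral_withDensity_eq_lintegral_mul _ (measurable_gaussianPDF _ _)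
      h4,
    lintegral_withDensity_eq_lintegral_mul _ (measurable_gaussianPDF _ _) h1]
  refine lintegral_congr fun x => ?_
  simp only [Pi.mul_apply, ← mul_assoc]
  congr 1
  rw [gaussianPDF, gaussianPDF, ← ENNReal.ofReal_mul (gaussianPDFReal_nonneg _ _ _)]
  congr 1
  rw [gaussianPDFReal, gaussianPDFReal, mul_assoc, ← Real.exp_add]
  congr 2
  simp
  ring

lemma gaussn_aux {n : ℕ} (d : Fin n → ℝ) (B : Set (Fin n → ℝ)) (hB : MeasurableSet B) :
    ∫⁻ w, ENNReal.ofReal (Real.exp (-(1 / 2) * (∑ i, (d i) ^ 2) + ∑ i, d i * w i)) *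
      B.indicator 1 (w - d) ∂(stdGaussian n) = stdGaussian n B := by
  have hm : Measurable fun w : Fin n → ℝ =>
      ENNReal.ofReal (Real.exp (-(1 / 2) * (∑ i, (d i) ^ 2) + ∑ i, d i * w i)) := by fun_prop
  have hsub : Measurable fun w : Fin n → ℝ => w - d := by fun_prop
  have key : ∀ B : Set (Fin n → ℝ), MeasurableSet B →
      (((stdGaussian n).withDensity fun w : Fin n → ℝ =>
      ENNReal.ofReal (Real.exp (-(1 / 2) * (∑ i, (d i) ^ 2) + ∑ i, d i * w i))).map
        fun w => w - d) B = ∫⁻ w, ENNReal.ofReal (Real.exp (-(1 / 2) * (∑ i, (d i) ^ 2)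
          + ∑ i, d i * w i)) * B.indicator 1 (w - d) ∂(stdGaussian n) := by
    intro B hB
    rw [← lintegral_indicator_one hB, lintegral_map (measurable_one.indicator hB) hsub,
      lintegral_withDensity_eq_lintegral_mul _ hm
        (show Measurable fun w : Fin n → ℝ => B.indicator (1 : (Fin n → ℝ) → ENNReal) (w - d) from
          (measurable_one.indicator hB).comp hsub)]
    rfl
  rw [← key B hB]
  congr 1
  symm
  refine Measure.pi_eq fun s hs => ?_
  rw [key _ (MeasurableSet.univ_pi hs)]
  have hi : iIndepFun (fun (i : Fin n) (w : Fin n → ℝ) =>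
      ENNReal.ofReal (Real.exp (-(1 / 2) * (d i) ^ 2 + d i * w i)) *
        (s i).indicator (1 : ℝ → ENNReal) (w i - d i)) (stdGaussian n) := by
    refine iIndepFun_pi (μ := fun _ : Fin n => gaussianReal 0 1) (X := fun i x =>
      ENNReal.ofReal (Real.exp (-(1 / 2) * (d i) ^ 2 + d i * x)) *
        (s i).indicator (1 : ℝ → ENNReal) (x - d i)) fun i => ?_
    have := (measurable_one (α := ENNReal).indicator (hs i)).comp (measurable_id.sub_const (d i))
    exact (Measurable.mul (by fun_prop) this).aemeasurable
  have hmeas : ∀ i : Fin n, Measurable fun x : ℝ =>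
      ENNReal.ofReal (Real.exp (-(1 / 2) * (d i) ^ 2 + d i * x)) *
        (s i).indicator (1 : ℝ → ENNReal) (x - d i) := fun i =>
    Measurable.mul (by fun_prop)
      ((measurable_one.indicator (hs i)).comp (measurable_id.sub_const (d i)))
  have hprod := lintegral_prod_eq_prod_lintegral_of_indepFun Finset.univ _ hi
    (fun i => (hmeas i).comp (measurable_pi_apply i))
  have h1 : ∀ i, ∫⁻ w, ENNReal.ofReal (Real.exp (-(1 / 2) * (d i) ^ 2 + d i * w i)) *
        (s i).indicator (1 : ℝ → ENNReal) (w i - d i) ∂(stdGaussian n)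
        = gaussianReal 0 1 (s i) := by
    intro i
    rw [← gauss1_aux (d i) (s i) (hs i)]
    exact (measurePreserving_eval (fun _ : Fin n => gaussianReal 0 1) i).lintegral_comp (hmeas i)
  simp only [h1] at hprod
  rw [← hprod]
  refine lintegral_congr fun w => ?_
  rw [Finset.prod_mul_distrib, ← ENNReal.ofReal_prod_of_nonneg (fun i _ => (Real.exp_pos _).le),
    ← Real.exp_sum, Finset.sum_add_distrib, Finset.mul_sum]
  congr 1
  by_cases h : w - d ∈ Set.univ.pi s
  · rw [Set.indicator_of_mem h]
    symm
    refine Finset.prod_eq_one fun i _ => ?_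
    rw [Set.indicator_of_mem (by simpa using h i (Set.mem_univ i))]; rfl
  · rw [Set.indicator_of_notMem h]
    simp only [Set.mem_univ_pi, not_forall] at h
    obtain ⟨i, hi⟩ := h
    symm
    exact Finset.prod_eq_zero (Finset.mem_univ i) (Set.indicator_of_notMem (by simpa using hi) _)

lemma girs_aux {Ω : Type*} (𝒢 : MeasurableSpace Ω) [mΩ : MeasurableSpace Ω]
    (P : Measure Ω) [IsProbabilityMeasure P] {n : ℕ} (h𝒢 : 𝒢 ≤ mΩ)
    (W : Ω → Fin n → ℝ) (hWmeas : Measurable W)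
    (hWlaw : Measure.map W P = stdGaussian n)
    (hWindep : Indep (MeasurableSpace.comap W inferInstance) 𝒢 P)
    (D : Ω → Fin n → ℝ) (hDmeas : Measurable[𝒢] D)
    (A : Set Ω) (hA : MeasurableSet[𝒢] A) (B : Set (Fin n → ℝ)) (hB : MeasurableSet B) :
    (P.withDensity fun ω => ENNReal.ofReal
      (Real.exp (-(1 / 2) * (∑ i, (D ω i) ^ 2) + ∑ i, D ω i * W ω i)))
      ((fun ω => W ω - D ω) ⁻¹' B ∩ A) = stdGaussian n B * P A := by
  have hD : Measurable D := hDmeas.mono h𝒢 le_rfl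
  have hA' : MeasurableSet A := h𝒢 _ hA
  let Y : Ω → (Fin n → ℝ) × ENNReal := fun ω => (D ω, A.indicator 1 ω)
  have hY𝒢 : Measurable[𝒢] Y :=
    Measurable.prodMk hDmeas
      (Measurable.indicator (@measurable_const _ _ _ 𝒢 (1 : ENNReal)) hA)
  have hY : Measurable Y := hY𝒢.mono h𝒢 le_rfl
  have hind : IndepFun W Y P := by
    rw [IndepFun_iff_Indep]
    exact indep_of_indep_of_le_right hWindep hY𝒢.comap_le
  have hlaw := (indepFun_iff_map_prod_eq_prod_map_map hWmeas.aemeasurable hY.aemeasurable).1 hind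
  rw [hWlaw] at hlaw
  have : IsProbabilityMeasure (stdGaussian n) := by
    unfold _root_.stdGaussian; infer_instance
  have hmapY : IsProbabilityMeasure (P.map Y) := Measure.isProbabilityMeasure_map hY.aemeasurable
  let F : (Fin n → ℝ) × ((Fin n → ℝ) × ENNReal) → ENNReal := fun p =>
    (ENNReal.ofReal (Real.exp (-(1 / 2) * (∑ i, (p.2.1 i) ^ 2) + ∑ i, p.2.1 i * p.1 i)) *
      B.indicator 1 (p.1 - p.2.1)) * p.2.2
  have hF : Measurable F := by
    have h0 : Measurable fun p : (Fin n → ℝ) × ((Fin n → ℝ) × ENNReal) =>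
        B.indicator (1 : (Fin n → ℝ) → ENNReal) (p.1 - p.2.1) :=
      (measurable_one.indicator hB).comp (measurable_fst.sub (measurable_fst.comp measurable_snd))
    exact Measurable.mul (Measurable.mul (by fun_prop) h0) (by fun_prop)
  have hs : MeasurableSet ((fun ω => W ω - D ω) ⁻¹' B ∩ A) := ((hWmeas.sub hD) hB).inter hA'
  calc _ = ∫⁻ ω, F (W ω, Y ω) ∂P := by
        rw [withDensity_apply _ hs, ← lintegral_indicator hs]
        refine lintegral_congr fun ω => ?_
        by_cases h1 : W ω - D ω ∈ B <;> by_cases h2 : ω ∈ A <;> simp [F, Y, h1, h2]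
    _ = ∫⁻ p, F p ∂((stdGaussian n).prod (P.map Y)) := by
        rw [← hlaw, lintegral_map hF (hWmeas.prodMk hY)]
    _ = ∫⁻ y, ∫⁻ w, F (w, y) ∂(stdGaussian n) ∂(P.map Y) := lintegral_prod_symm' _ hF
    _ = ∫⁻ y, stdGaussian n B * y.2 ∂(P.map Y) := by
        refine lintegral_congr fun y => ?_
        simp only [F]
        rw [lintegral_mul_const, gaussn_aux y.1 B hB]
        exact Measurable.mul (by fun_prop) ((measurable_one.indicator hB).comp (by fun_prop))
    _ = stdGaussian n B * P A := by
        rw [lintegral_map (by fun_prop) hY, lintegral_const_mul _ (by fun_prop)]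
        simp only [Y]
        rw [lintegral_indicator_one hA']

/-- **Single-step discrete-time Girsanov theorem.**
Let `W : Ω → ℝⁿ` have i.i.d. standard normal coordinates with `σ(W)` independent of the
sub-σ-algebra `𝒢`, let `D` be `𝒢`-measurable and bounded, and set
`Θ := exp(−½‖D‖² + ⟨D, W⟩)`.  Then `E_P[Θ] = 1`, so `Q := P.withDensity Θ` is a probability
measure; moreover under `Q` the random vector `W − D` has i.i.d. standard normal coordinates
and `σ(W − D)` is independent of `𝒢` under `Q`. -/
theorem single_step_discrete_girsanov
    {Ω : Type*} (𝒢 : MeasurableSpace Ω) [mΩ : MeasurableSpace Ω]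
    (P : Measure Ω) [IsProbabilityMeasure P]
    {n : ℕ} (h𝒢 : 𝒢 ≤ mΩ)
    (W : Ω → Fin n → ℝ) (hWmeas : Measurable W)
    (hWlaw : Measure.map W P = stdGaussian n)
    (hWindep : Indep (MeasurableSpace.comap W inferInstance) 𝒢 P)
    (D : Ω → Fin n → ℝ) (hDmeas : Measurable[𝒢] D)
    (hDbound : ∃ C, ∀ ω i, |D ω i| ≤ C)
    (Θ : Ω → ℝ)
    (hΘ : ∀ ω, Θ ω = Real.exp (-(1 / 2) * (∑ i, (D ω i) ^ 2) + ∑ i, D ω i * W ω i))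
    (Q : Measure Ω) (hQ : Q = P.withDensity fun ω => ENNReal.ofReal (Θ ω)) :
    (∫ ω, Θ ω ∂P = 1) ∧ IsProbabilityMeasure Q ∧
      Measure.map (fun ω => W ω - D ω) Q = stdGaussian n ∧
      Indep (MeasurableSpace.comap (fun ω => W ω - D ω) inferInstance) 𝒢 Q := by
  have hD : Measurable D := hDmeas.mono h𝒢 le_rfl
  have : IsProbabilityMeasure (stdGaussian n) := by
    unfold _root_.stdGaussian; infer_instance
  have hΘ' : Θ = fun ω => Real.exp (-(1 / 2) * (∑ i, (D ω i) ^ 2) + ∑ i, D ω i * W ω i) :=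
    funext hΘ
  have key : ∀ (A : Set Ω) (B : Set (Fin n → ℝ)), MeasurableSet[𝒢] A → MeasurableSet B →
      Q ((fun ω => W ω - D ω) ⁻¹' B ∩ A) = stdGaussian n B * P A := by
    intro A B hA hB
    rw [hQ, hΘ']
    exact girs_aux 𝒢 P h𝒢 W hWmeas hWlaw hWindep D hDmeas A hA B hB
  have hQ1 : Q Set.univ = 1 := by
    simpa using key Set.univ Set.univ (@MeasurableSet.univ _ 𝒢) MeasurableSet.univ
  have hB' : ∀ B : Set (Fin n → ℝ), MeasurableSet B →
      Q ((fun ω => W ω - D ω) ⁻¹' B) = stdGaussian n B := by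
    intro B hB
    simpa using key Set.univ B (@MeasurableSet.univ _ 𝒢) hB
  have hA' : ∀ A : Set Ω, MeasurableSet[𝒢] A → Q A = P A := by
    intro A hA
    simpa using key A Set.univ hA MeasurableSet.univ
  have hΘm : Measurable Θ := by rw [hΘ']; fun_prop
  refine ⟨?_, ⟨hQ1⟩, ?_, ?_⟩
  · rw [integral_eq_lintegral_of_nonneg_ae
      (Filter.Eventually.of_forall fun ω => by rw [hΘ]; exact (Real.exp_pos _).le)
      hΘm.aestronglyMeasurable]
    rw [hQ, withDensity_apply _ MeasurableSet.univ, Measure.restrict_univ] at hQ1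
    rw [hQ1, ENNReal.toReal_one]
  · ext B hB
    have hm : Measurable fun ω => W ω - D ω := hWmeas.sub hD
    rw [Measure.map_apply hm hB, hB' B hB]
  · rw [Indep_iff]
    rintro _ A ⟨B, hB, rfl⟩ hA
    rw [key A B hA hB, hB' B hB, hA' A hA]
end

section
/- Let D : Ω → ℝⁿ be 𝒢-measurable and bounded. Then E[exp(⟨D, W⟩) | 𝒢] = exp(½‖D‖²) almost surely; equivalently, E[exp(−½‖D‖² + ⟨D, W⟩) | 𝒢] = 1 almost surely. -/
open MeasureTheory ProbabilityTheory

lemma aux_gauss {n : ℕ} (d : Fin n → ℝ) :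
    Integrable (fun w : Fin n → ℝ => Real.exp (∑ i, d i * w i))
      (Measure.pi fun _ : Fin n => gaussianReal 0 1) ∧
    ∫ w : Fin n → ℝ, Real.exp (∑ i, d i * w i) ∂(Measure.pi fun _ : Fin n => gaussianReal 0 1)
      = Real.exp ((1 / 2) * ∑ i, (d i) ^ 2) := by
  simp_rw [Real.exp_sum]
  constructor
  · exact Integrable.fintype_prod (f := fun i x => Real.exp (d i * x))
      (fun i => integrable_exp_mul_gaussianReal (d i))
  · rw [integral_fintype_prod_eq_prod (f := fun i x => Real.exp (d i * x)), Finset.mul_sum,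
      Real.exp_sum]
    refine Finset.prod_congr rfl fun i _ => ?_
    have h := mgf_gaussianReal (p := gaussianReal 0 1) (X := id) (μ := 0) (v := 1) (by simp) (d i)
    simp only [mgf, id] at h
    rw [h]
    congr 1
    push_cast
    ring

lemma aux_indep {Ω : Type*} [mΩ : MeasurableSpace Ω]
    (P : Measure Ω) [IsProbabilityMeasure P] {n : ℕ}
    (W : Ω → Fin n → ℝ) (hW : Measurable W)
    (hlaw : Measure.map W P = Measure.pi fun _ : Fin n => gaussianReal 0 1)
    (X : Ω → ℝ × (Fin n → ℝ)) (hX : Measurable X) (hind : IndepFun X W P)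
    (hint : Integrable (fun ω => (X ω).1 * Real.exp ((1 / 2) * ∑ i, ((X ω).2 i) ^ 2)) P) :
    Integrable (fun ω => (X ω).1 * Real.exp (∑ i, (X ω).2 i * W ω i)) P ∧
    ∫ ω, (X ω).1 * Real.exp (∑ i, (X ω).2 i * W ω i) ∂P
      = ∫ ω, (X ω).1 * Real.exp ((1 / 2) * ∑ i, ((X ω).2 i) ^ 2) ∂P := by
  have hmap := (indepFun_iff_map_prod_eq_prod_map_map hX.aemeasurable hW.aemeasurable).1 hind
  rw [hlaw] at hmap
  let f : (ℝ × (Fin n → ℝ)) × (Fin n → ℝ) → ℝ :=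
    fun p => p.1.1 * Real.exp (∑ i, p.1.2 i * p.2 i)
  have hf : Measurable f := by fun_prop
  have hg : Measurable (fun x : ℝ × (Fin n → ℝ) => x.1 * Real.exp ((1 / 2) * ∑ i, (x.2 i) ^ 2)) := by
    fun_prop
  have : IsProbabilityMeasure (P.map X) := Measure.isProbabilityMeasure_map hX.aemeasurable
  have hfi : Integrable f ((P.map X).prod (Measure.pi fun _ : Fin n => gaussianReal 0 1)) := by
    rw [integrable_prod_iff hf.aestronglyMeasurable]
    refine ⟨.of_forall fun x => (aux_gauss x.2).1.const_mul x.1, ?_⟩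
    have : (fun x => ∫ y, ‖f (x, y)‖ ∂(Measure.pi fun _ : Fin n => gaussianReal 0 1))
        = fun x => ‖x.1 * Real.exp ((1 / 2) * ∑ i, (x.2 i) ^ 2)‖ := by
      funext x
      simp only [f, norm_mul, Real.norm_eq_abs, Real.abs_exp]
      rw [integral_const_mul, (aux_gauss x.2).2]
    rw [this]
    exact ((integrable_map_measure hg.aestronglyMeasurable hX.aemeasurable).2 hint).norm
  constructor
  · rw [← hmap] at hfi
    exact (integrable_map_measure hf.aestronglyMeasurable (hX.prodMk hW).aemeasurable).1 hfi
  · have h1 := integral_map (hX.prodMk hW).aemeasurable (μ := P) hf.aestronglyMeasurable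
    have h2 := integral_map hX.aemeasurable (μ := P) hg.aestronglyMeasurable
    rw [← h2]
    refine h1.symm.trans ?_
    rw [hmap, integral_prod _ hfi]
    refine integral_congr_ae (.of_forall fun x => ?_)
    simp only [f]
    rw [integral_const_mul, (aux_gauss x.2).2]

/-- **Conditional Gaussian moment-generating-function identity.**
If `W : Ω → ℝⁿ` has i.i.d. standard normal coordinates with `σ(W)` independent of the
sub-σ-algebra `𝒢`, and `D` is `𝒢`-measurable and bounded, then almost surely
`E[exp⟨D,W⟩ | 𝒢] = exp(½‖D‖²)`; equivalently `E[exp(−½‖D‖² + ⟨D,W⟩) | 𝒢] = 1`. -/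
theorem condexp_gaussian_mgf
    {Ω : Type*} (𝒢 : MeasurableSpace Ω) [mΩ : MeasurableSpace Ω]
    (P : Measure Ω) [IsProbabilityMeasure P]
    {n : ℕ} (h𝒢 : 𝒢 ≤ mΩ)
    (W : Ω → Fin n → ℝ) (hWmeas : Measurable W)
    (hWlaw : Measure.map W P = stdGaussian n)
    (hWindep : Indep (MeasurableSpace.comap W inferInstance) 𝒢 P)
    (D : Ω → Fin n → ℝ) (hDmeas : Measurable[𝒢] D)
    (hDbound : ∃ C, ∀ ω i, |D ω i| ≤ C) :
    P[fun ω => Real.exp (∑ i, D ω i * W ω i)|𝒢]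
        =ᵐ[P] (fun ω => Real.exp ((1 / 2) * ∑ i, (D ω i) ^ 2)) ∧
      P[fun ω => Real.exp (-(1 / 2) * (∑ i, (D ω i) ^ 2) + ∑ i, D ω i * W ω i)|𝒢]
        =ᵐ[P] (fun _ => 1) := by
  classical
  have hDm : Measurable D := hDmeas.mono h𝒢 le_rfl
  obtain ⟨C, hC⟩ := hDbound
  have hlaw : Measure.map W P = Measure.pi fun _ : Fin n => gaussianReal 0 1 := hWlaw
  have hgm : Measurable[𝒢] (fun ω => Real.exp ((1 / 2) * ∑ i, (D ω i) ^ 2)) :=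
    (show Measurable (fun d : Fin n → ℝ => Real.exp ((1 / 2) * ∑ i, (d i) ^ 2)) by
      fun_prop).comp hDmeas
  have hgi : Integrable (fun ω => Real.exp ((1 / 2) * ∑ i, (D ω i) ^ 2)) P := by
    refine Integrable.of_bound (hgm.mono h𝒢 le_rfl).aestronglyMeasurable
      (Real.exp ((1 / 2) * ∑ _i : Fin n, C ^ 2)) (.of_forall fun ω => ?_)
    rw [Real.norm_eq_abs, Real.abs_exp]
    refine Real.exp_le_exp.2 (mul_le_mul_of_nonneg_left (Finset.sum_le_sum fun i _ => ?_)
      (by norm_num))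
    exact sq_le_sq' (abs_le.1 (hC ω i)).1 (abs_le.1 (hC ω i)).2
  have key : ∀ s, MeasurableSet[𝒢] s →
      Integrable (fun ω => s.indicator (fun _ => (1 : ℝ)) ω * Real.exp (∑ i, D ω i * W ω i)) P ∧
      ∫ ω, s.indicator (fun _ => (1 : ℝ)) ω * Real.exp (∑ i, D ω i * W ω i) ∂P
      = ∫ ω, s.indicator (fun _ => (1 : ℝ)) ω * Real.exp ((1 / 2) * ∑ i, (D ω i) ^ 2) ∂P := by
    intro s hs
    have h1 : Measurable[𝒢] (s.indicator (fun _ => (1 : ℝ))) :=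
      Measurable.indicator (m := 𝒢) (@measurable_const _ _ _ 𝒢 _) hs
    have hX : Measurable[𝒢] (fun ω => (s.indicator (fun _ => (1 : ℝ)) ω, D ω)) :=
      Measurable.prodMk h1 hDmeas
    refine aux_indep P W hWmeas hlaw (fun ω => (s.indicator (fun _ => (1 : ℝ)) ω, D ω))
      (hX.mono h𝒢 le_rfl) ?_ ?_
    · rw [IndepFun_iff_Indep]
      exact indep_of_indep_of_le_left hWindep.symm hX.comap_le
    · have := hgi.indicator (h𝒢 s hs)
      refine this.congr (.of_forall fun ω => ?_)
      by_cases h : ω ∈ s <;> simp [h]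
  have hfi : Integrable (fun ω => Real.exp (∑ i, D ω i * W ω i)) P := by
    simpa using (key Set.univ MeasurableSet.univ).1
  have first : P[fun ω => Real.exp (∑ i, D ω i * W ω i)|𝒢]
        =ᵐ[P] (fun ω => Real.exp ((1 / 2) * ∑ i, (D ω i) ^ 2)) := by
    symm
    refine ae_eq_condExp_of_forall_setIntegral_eq h𝒢 hfi (fun s _ _ => hgi.integrableOn) ?_
      hgm.stronglyMeasurable.aestronglyMeasurable
    intro s hs _
    have e : ∀ u : Ω → ℝ, ∫ ω in s, u ω ∂P
        = ∫ ω, s.indicator (fun _ => (1 : ℝ)) ω * u ω ∂P := by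
      intro u
      rw [← integral_indicator (h𝒢 s hs)]
      refine integral_congr_ae (.of_forall fun ω => ?_)
      by_cases h : ω ∈ s <;> simp [h]
    rw [e, e, (key s hs).2]
  refine ⟨first, ?_⟩
  have hhm : Measurable[𝒢] (fun ω => Real.exp (-(1 / 2) * ∑ i, (D ω i) ^ 2)) :=
    (show Measurable (fun d : Fin n → ℝ => Real.exp (-(1 / 2) * ∑ i, (d i) ^ 2)) by
      fun_prop).comp hDmeas
  have hprod : Integrable ((fun ω => Real.exp (-(1 / 2) * ∑ i, (D ω i) ^ 2)) *
      (fun ω => Real.exp (∑ i, D ω i * W ω i))) P := by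
    refine hfi.bdd_mul (c := 1) (hhm.mono h𝒢 le_rfl).aestronglyMeasurable
      (.of_forall fun ω => ?_)
    rw [Real.norm_eq_abs, Real.abs_exp, Real.exp_le_one_iff]
    have : 0 ≤ ∑ i, (D ω i) ^ 2 := Finset.sum_nonneg fun i _ => sq_nonneg _
    linarith
  have h2 := condExp_mul_of_stronglyMeasurable_left (m := 𝒢) hhm.stronglyMeasurable hprod hfi
  have e : (fun ω => Real.exp (-(1 / 2) * (∑ i, (D ω i) ^ 2) + ∑ i, D ω i * W ω i))
      = (fun ω => Real.exp (-(1 / 2) * ∑ i, (D ω i) ^ 2)) *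
      (fun ω => Real.exp (∑ i, D ω i * W ω i)) := by
    funext ω
    simp [Real.exp_add]
  rw [e]
  filter_upwards [h2, first] with ω h2 h1
  rw [h2, Pi.mul_apply, h1, ← Real.exp_add]
  simp
end
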